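/- Let f : A* → A* be a morphism with a fixed infinite word x (f(x) = x) such that f ∈ M_x. Then for any total order ρ on A and any letter b occurring in x, there exist a total order σ on A, a letter a ∈ A, finite words u, v, and integers k, m ≥ 1 such that s_{b,ρ,x} = u·f^k(s_{a,σ,x}) and s_{a,σ,x} = v·f^m(s_{a,σ,x}), where s_{c,τ,x} denotes the lexicographically least (w.r.t. τ) word in the shift orbit closure of x beginning with c, with its first letter removed. -/

import Mathlib

/-- The prefix of length `n` of an infinite word. -/
def wordPrefix {A : Type*} (x : ℕ → A) (n : ℕ) : List A :=
  List.ofFn (fun i : Fin n => x i)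

/-- A finite word is a prefix of an infinite word. -/
def IsPrefixOfWord {A : Type*} (w : List A) (x : ℕ → A) : Prop :=
  wordPrefix x w.length = w

/-- A finite word is a factor of an infinite word. -/
def IsFactor {A : Type*} (w : List A) (x : ℕ → A) : Prop :=
  ∃ i, w = List.ofFn (fun j : Fin w.length => x (i + j))

/-- `y` belongs to the shift orbit closure of `x`. -/
def InOrbitClosure {A : Type*} (y x : ℕ → A) : Prop :=
  ∀ w, IsFactor w y → IsFactor w x

/-- A morphism `A* → B*` applied to a finite word. -/
def applyMorphism {A B : Type*} (f : A → List B) (w : List A) : List B :=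
  w.flatMap f

/-- The `n`-th iterate of a morphism applied to a finite word. -/
def applyIter {A : Type*} (f : A → List A) (n : ℕ) (w : List A) : List A :=
  (applyMorphism f)^[n] w

/-- `y = f(x)` for infinite words: every image of a prefix of `x` is a prefix of `y`. -/
def IsWordImage {A B : Type*} (f : A → List B) (x : ℕ → A) (y : ℕ → B) : Prop :=
  ∀ n, IsPrefixOfWord (applyMorphism f (wordPrefix x n)) y

/-- Prepend a finite word to an infinite word. -/
def prepend {A : Type*} (w : List A) (x : ℕ → A) : ℕ → A :=
  fun n => if h : n < w.length then w.get ⟨n, h⟩ else x (n - w.length)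

/-- Strict lexicographic order on infinite words induced by the order `r` on letters. -/
def LexLt {A : Type*} (r : A → A → Prop) (x y : ℕ → A) : Prop :=
  ∃ n, (∀ i, i < n → x i = y i) ∧ r (x n) (y n)

def LexLe {A : Type*} (r : A → A → Prop) (x y : ℕ → A) : Prop :=
  LexLt r x y ∨ x = y

/-- `l` is the lexicographically least word (w.r.t. `r`) in the shift orbit closure
of `x` beginning with the letter `a`. -/
def IsLeastWord {A : Type*} (r : A → A → Prop) (x : ℕ → A) (a : A) (l : ℕ → A) : Prop :=
  InOrbitClosure l x ∧ l 0 = a ∧ ∀ y, InOrbitClosure y x → y 0 = a → LexLe r l y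

/-- `f` is prolongable on `a` (and generates an infinite word from `a`). -/
def IsGenerating {A : Type*} (f : A → List A) (a : A) : Prop :=
  ∃ s, f a = a :: s ∧ s ≠ [] ∧ ∀ n, applyIter f n s ≠ []

/-- `x` is the pure morphic word `f^ω(a)`. -/
def IsPureMorphic {A : Type*} (f : A → List A) (a : A) (x : ℕ → A) : Prop :=
  x 0 = a ∧ IsGenerating f a ∧ IsWordImage f x x

/-- `x` is a morphic word: the image under a coding of a pure morphic word. -/
def IsMorphic {B : Type*} (x : ℕ → B) : Prop :=
  ∃ (k : ℕ) (g : Fin k → List (Fin k)) (b : Fin k) (c : Fin k → B) (t : ℕ → Fin k),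
    IsPureMorphic g b t ∧ x = c ∘ t

/-- `f ∈ M_x`: each letter `b` has a nonempty "marker" word `p b` such that `f(y)`
begins with `p b` whenever `y ∈ S_x` begins with `b`, and the markers of distinct
letters are prefix-incomparable. -/
def MemM {A B : Type*} (f : A → List B) (x : ℕ → A) : Prop :=
  ∃ p : A → List B, (∀ b, p b ≠ []) ∧
    (∀ (b : A) (y : ℕ → A), InOrbitClosure y x → y 0 = b →
      ∃ n, p b <+: applyMorphism f (wordPrefix y n)) ∧
    (∀ a b : A, a ≠ b → ¬ p a <+: p b ∧ ¬ p b <+: p a)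

/-- Every factor occurs infinitely often. -/
def Recurrent {A : Type*} (x : ℕ → A) : Prop :=
  ∀ w, IsFactor w x → ∀ N, ∃ i, N ≤ i ∧ w = List.ofFn (fun j : Fin w.length => x (i + j))

/-- Ultimately periodic infinite word. -/
def UltimatelyPeriodic {A : Type*} (x : ℕ → A) : Prop :=
  ∃ N p, 0 < p ∧ ∀ n, N ≤ n → x (n + p) = x n

/-- The period-doubling morphism `0 ↦ 01`, `1 ↦ 00`. -/
def pdMorph : Bool → List Bool := fun b => if b then [false, false] else [false, true]

/-- The morphism `0 ↦ 0001`, `1 ↦ 0101`. -/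
def gMorph : Bool → List Bool :=
  fun b => if b then [false, true, false, true] else [false, false, false, true]

/-- The Chacon morphism `0 ↦ 0010`, `1 ↦ 1`. -/
def chMorph : Bool → List Bool := fun b => if b then [true] else [false, false, true, false]

/-- The Rudin–Shapiro morphism `0 ↦ 01`, `1 ↦ 02`, `2 ↦ 31`, `3 ↦ 32`. -/
def rsMorph : Fin 4 → List (Fin 4) := ![[0, 1], [0, 2], [3, 1], [3, 2]]

/-- The Rudin–Shapiro coding `0 ↦ 0`, `1 ↦ 0`, `2 ↦ 1`, `3 ↦ 1`. -/
def rsCoding : Fin 4 → Bool := ![false, false, true, true]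

/-- The 2-bit binary representation morphism `0 ↦ 00`, `1 ↦ 01`, `2 ↦ 10`, `3 ↦ 11`. -/
def hMorph : Fin 4 → List Bool := ![[false, false], [false, true], [true, false], [true, true]]

/-!
The markers `p c` order the alphabet by `c < d ↔ p c < p d` lexicographically with respect to `ρ`.
No marker is a prefix of another, so this is a total order on letters, and `f` is strictly
increasing from it to `ρ` on the orbit closure of `x`. By compactness every word of the orbit
closure can be written `T^r (f z)`, where `T` is the shift, with `z` in the orbit closure and
`r < |f (z 0)|`. If `T^r (f z)` is the least word beginning with its first letter, then `z` is the
least word beginning with `z 0` for the new order, by monotonicity. Dropping first letters, each of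
the words `s_{c,τ,x}` therefore ends with `f s'` for some `s'` of the same kind; since there are
only finitely many of them, iterating `s ↦ s'` runs into a cycle.
-/

section Words

variable {A : Type*} {x y : ℕ → A} {m n : ℕ}

/-- The infinite word `x` with its first `k` letters removed: the `k`-th power of the shift map. -/
def wordShift (x : ℕ → A) (k : ℕ) : ℕ → A :=
  fun n => x (n + k)

theorem wordShift_wordShift (x : ℕ → A) (k l : ℕ) :
    wordShift (wordShift x k) l = wordShift x (k + l) := by
  funext n
  simp only [wordShift, Nat.add_assoc, Nat.add_comm l]

@[simp]
theorem wordShift_apply_zero (x : ℕ → A) (k : ℕ) : wordShift x k 0 = x k := by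
  simp only [wordShift, Nat.zero_add]

@[simp]
theorem length_wordPrefix (x : ℕ → A) (n : ℕ) : (wordPrefix x n).length = n :=
  List.length_ofFn

theorem wordPrefix_one (x : ℕ → A) : wordPrefix x 1 = [x 0] := by
  simp [wordPrefix]

theorem wordPrefix_add (x : ℕ → A) (m n : ℕ) :
    wordPrefix x (m + n) = wordPrefix x m ++ wordPrefix (wordShift x m) n := by
  simp [wordPrefix, wordShift, List.ofFn_add, Nat.add_comm]

theorem wordPrefix_eq_iff : wordPrefix x n = wordPrefix y n ↔ ∀ i < n, x i = y i := by
  simp only [wordPrefix, List.ofFn_inj, funext_iff, Fin.forall_iff]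

theorem wordPrefix_eq_of_le (h : wordPrefix x n = wordPrefix y n) (hmn : m ≤ n) :
    wordPrefix x m = wordPrefix y m :=
  wordPrefix_eq_iff.2 fun i hi => wordPrefix_eq_iff.1 h i (hi.trans_le hmn)

theorem wordPrefix_wordShift_eq (h : wordPrefix x (m + n) = wordPrefix y (m + n)) :
    wordPrefix (wordShift x m) n = wordPrefix (wordShift y m) n :=
  wordPrefix_eq_iff.2 fun i hi => wordPrefix_eq_iff.1 h (i + m) (by omega)

theorem eq_of_forall_wordPrefix_eq (h : ∀ n, wordPrefix x n = wordPrefix y n) : x = y :=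
  funext fun n => wordPrefix_eq_iff.1 (h (n + 1)) n n.lt_succ_self

theorem prepend_wordPrefix_wordShift (x : ℕ → A) (n : ℕ) :
    prepend (wordPrefix x n) (wordShift x n) = x := by
  funext i
  by_cases hi : i < n
  · simp [prepend, wordPrefix, hi]
  · simp [prepend, wordShift, hi, Nat.sub_add_cancel (not_lt.1 hi)]

theorem isPrefixOfWord_append {v w : List A} : IsPrefixOfWord (v ++ w) x ↔
    IsPrefixOfWord v x ∧ IsPrefixOfWord w (wordShift x v.length) := by
  rw [IsPrefixOfWord, List.length_append, wordPrefix_add]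
  exact ⟨fun h => List.append_inj h (length_wordPrefix ..), fun h => congrArg₂ _ h.1 h.2⟩

theorem isPrefixOfWord_cons {a : A} {w : List A} : IsPrefixOfWord (a :: w) x ↔
    x 0 = a ∧ IsPrefixOfWord w (wordShift x 1) := by
  rw [← List.singleton_append, isPrefixOfWord_append]
  simp [IsPrefixOfWord, wordPrefix_one]

end Words

section OrbitClosure

variable {A B : Type*} {x y : ℕ → A}

theorem inOrbitClosure_iff :
    InOrbitClosure y x ↔ ∀ n, ∃ i, wordPrefix y n = wordPrefix (wordShift x i) n := by
  constructor
  · intro h n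
    obtain ⟨i, hi⟩ := h (wordPrefix y n) ⟨0, by simp [wordPrefix]⟩
    refine ⟨i, hi.trans ?_⟩
    simp [wordPrefix, wordShift, Nat.add_comm]
  · rintro h w ⟨i, hi⟩
    obtain ⟨k, hk⟩ := h (i + w.length)
    refine ⟨k + i, hi.trans (List.ofFn_inj.2 (funext fun j => ?_))⟩
    rw [wordPrefix_eq_iff.1 hk (i + j) (by omega)]
    simp only [wordShift, Nat.add_comm, Nat.add_left_comm]

theorem inOrbitClosure_self (x : ℕ → A) : InOrbitClosure x x :=
  fun _ => id

namespace InOrbitClosure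

theorem shift (h : InOrbitClosure y x) (k : ℕ) : InOrbitClosure (wordShift y k) x := by
  refine inOrbitClosure_iff.2 fun n => ?_
  obtain ⟨i, hi⟩ := inOrbitClosure_iff.1 h (k + n)
  exact ⟨i + k, by rw [wordPrefix_wordShift_eq hi, wordShift_wordShift]⟩

theorem exists_apply_eq (h : InOrbitClosure y x) (n : ℕ) : ∃ i, y n = x i := by
  obtain ⟨i, hi⟩ := inOrbitClosure_iff.1 h (n + 1)
  exact ⟨n + i, wordPrefix_eq_iff.1 hi n n.lt_succ_self⟩

theorem apply_ne_nil {f : A → List B} (h : InOrbitClosure y x) (hf : ∀ i, f (x i) ≠ []) (n : ℕ) :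
    f (y n) ≠ [] := by
  obtain ⟨i, hi⟩ := h.exists_apply_eq n
  exact hi ▸ hf i

end InOrbitClosure

end OrbitClosure

section LexOrder

variable {A : Type*} {r : A → A → Prop} {x y z : ℕ → A}

theorem lexLe_iff_not_lexLt [IsStrictTotalOrder A r] : LexLe r x y ↔ ¬ LexLt r y x := by
  classical
  let _ : LinearOrder A := linearOrderOfSTO r
  exact le_iff_lt_or_eq.symm.trans (not_lt (a := toLex y) (b := toLex x)).symm

theorem LexLe.antisymm [IsStrictTotalOrder A r] (h : LexLe r x y) (h' : LexLe r y x) : x = y :=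
  h.resolve_left (lexLe_iff_not_lexLt.1 h')

theorem IsLeastWord.unique [IsStrictTotalOrder A r] {a : A} (hy : IsLeastWord r x a y)
    (hz : IsLeastWord r x a z) : y = z :=
  (hy.2.2 z hz.1 hz.2.1).antisymm (hz.2.2 y hy.1 hy.2.1)

theorem lexLt_of_lexLt_wordShift {k : ℕ} (h : wordPrefix x k = wordPrefix y k)
    (hlt : LexLt r (wordShift x k) (wordShift y k)) : LexLt r x y := by
  obtain ⟨n, hn, hr⟩ := hlt
  refine ⟨n + k, fun i hi => ?_, hr⟩
  rcases lt_or_ge i k with hik | hki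
  · exact wordPrefix_eq_iff.1 h i hik
  · obtain ⟨j, rfl⟩ := Nat.exists_eq_add_of_le' hki
    exact hn j (by omega)

theorem LexLt.shift [Std.Irrefl r] {k : ℕ} (hlt : LexLt r x y)
    (h : wordPrefix x k = wordPrefix y k) : LexLt r (wordShift x k) (wordShift y k) := by
  obtain ⟨n, hn, hr⟩ := hlt
  have hkn : k ≤ n := by
    by_contra hnk
    exact irrefl_of r (y n) (wordPrefix_eq_iff.1 h n (not_le.1 hnk) ▸ hr)
  obtain ⟨j, rfl⟩ := Nat.exists_eq_add_of_le' hkn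
  exact ⟨j, fun i hi => hn (i + k) (by omega), hr⟩

theorem lexLt_of_isPrefixOfWord {u v : List A} (huv : List.Lex r u v)
    (hprefix : ¬ u <+: v) (hu : IsPrefixOfWord u x) (hv : IsPrefixOfWord v y) : LexLt r x y := by
  induction huv generalizing x y with
  | nil => exact absurd List.nil_prefix hprefix
  | rel hab =>
    rw [isPrefixOfWord_cons] at hu hv
    exact ⟨0, nofun, hu.1.symm ▸ hv.1.symm ▸ hab⟩
  | cons _ ih =>
    rw [List.cons_prefix_cons] at hprefix
    rw [isPrefixOfWord_cons] at hu hv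
    have hxy : wordPrefix x 1 = wordPrefix y 1 := by
      rw [wordPrefix_one, wordPrefix_one, hu.1, hv.1]
    exact lexLt_of_lexLt_wordShift hxy (ih (fun h => hprefix ⟨rfl, h⟩) hu.2 hv.2)

end LexOrder

section Image

variable {A B C : Type*} {x x' : ℕ → A} {y y' : ℕ → B} {f : A → List B}

/-- The length of `f(x 0 ⋯ x (n - 1))`, i.e. the position in `f(x)` at which the image of the letter
`x n` starts. -/
def imageLength (f : A → List B) (x : ℕ → A) (n : ℕ) : ℕ :=
  (applyMorphism f (wordPrefix x n)).length

theorem applyMorphism_wordPrefix_add (f : A → List B) (x : ℕ → A) (m n : ℕ) :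
    applyMorphism f (wordPrefix x (m + n)) =
      applyMorphism f (wordPrefix x m) ++ applyMorphism f (wordPrefix (wordShift x m) n) := by
  rw [wordPrefix_add, applyMorphism, List.flatMap_append]
  rfl

theorem applyMorphism_wordPrefix_prefix (f : A → List B) (x : ℕ → A) {m n : ℕ} (h : m ≤ n) :
    applyMorphism f (wordPrefix x m) <+: applyMorphism f (wordPrefix x n) := by
  obtain ⟨k, rfl⟩ := Nat.exists_eq_add_of_le h
  exact applyMorphism_wordPrefix_add f x m k ▸ List.prefix_append ..

theorem applyMorphism_wordPrefix_one (f : A → List B) (x : ℕ → A) :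
    applyMorphism f (wordPrefix x 1) = f (x 0) := by
  rw [wordPrefix_one, applyMorphism, List.flatMap_singleton]

theorem imageLength_one (f : A → List B) (x : ℕ → A) : imageLength f x 1 = (f (x 0)).length := by
  rw [imageLength, applyMorphism_wordPrefix_one]

theorem imageLength_add (f : A → List B) (x : ℕ → A) (m n : ℕ) :
    imageLength f x (m + n) = imageLength f x m + imageLength f (wordShift x m) n := by
  rw [imageLength, applyMorphism_wordPrefix_add, List.length_append]
  rfl

theorem imageLength_succ (f : A → List B) (x : ℕ → A) (n : ℕ) :
    imageLength f x (n + 1) = imageLength f x n + (f (x n)).length := by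
  rw [imageLength_add, imageLength_one, wordShift_apply_zero]

theorem le_imageLength (hf : ∀ i, f (x i) ≠ []) (n : ℕ) : n ≤ imageLength f x n := by
  induction n with
  | zero => exact Nat.zero_le _
  | succ n ih =>
    rw [imageLength_succ]
    exact Nat.add_le_add ih (List.length_pos_of_ne_nil (hf n))

theorem exists_eq_imageLength_add (hf : ∀ i, f (x i) ≠ []) (n : ℕ) :
    ∃ k r, r < (f (x k)).length ∧ n = imageLength f x k + r := by
  induction n with
  | zero => exact ⟨0, 0, List.length_pos_of_ne_nil (hf 0), rfl⟩
  | succ n ih =>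
    obtain ⟨k, r, hr, rfl⟩ := ih
    rcases (Nat.succ_le_of_lt hr).lt_or_eq with hlt | heq
    · exact ⟨k, r + 1, hlt, rfl⟩
    · exact ⟨k + 1, 0, List.length_pos_of_ne_nil (hf _), by rw [imageLength_succ]; omega⟩

theorem exists_isWordImage (hf : ∀ i, f (x i) ≠ []) : ∃ y, IsWordImage f x y := by
  have hlt (n : ℕ) : n < (applyMorphism f (wordPrefix x (n + 1))).length :=
    le_imageLength hf (n + 1)
  refine ⟨fun n => (applyMorphism f (wordPrefix x (n + 1)))[n]'(hlt n), fun n => ?_⟩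
  refine List.ext_getElem (length_wordPrefix ..) fun i hi hi' => ?_
  simp only [wordPrefix, List.getElem_ofFn]
  rcases le_total n (i + 1) with hni | hin
  · exact ((applyMorphism_wordPrefix_prefix f x hni).getElem hi').symm
  · exact (applyMorphism_wordPrefix_prefix f x hin).getElem (hlt i)

namespace IsWordImage

theorem wordPrefix_imageLength (h : IsWordImage f x y) (n : ℕ) :
    wordPrefix y (imageLength f x n) = applyMorphism f (wordPrefix x n) :=
  h n

theorem wordPrefix_eq (h : IsWordImage f x y) (h' : IsWordImage f x' y') {n : ℕ}
    (hx : wordPrefix x n = wordPrefix x' n) :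
    wordPrefix y (imageLength f x n) = wordPrefix y' (imageLength f x n) := by
  have hy' := h'.wordPrefix_imageLength n
  rw [imageLength, ← hx] at hy'
  exact (h.wordPrefix_imageLength n).trans hy'.symm

theorem shift (h : IsWordImage f x y) (k : ℕ) :
    IsWordImage f (wordShift x k) (wordShift y (imageLength f x k)) := by
  intro n
  have hkn := h (k + n)
  rw [applyMorphism_wordPrefix_add, isPrefixOfWord_append] at hkn
  exact hkn.2

theorem comp {g : B → List C} {z : ℕ → C} (hf : IsWordImage f x y) (hg : IsWordImage g y z) :
    IsWordImage (fun a => applyMorphism g (f a)) x z := by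
  intro n
  have hgn := hg (imageLength f x n)
  rw [hf.wordPrefix_imageLength, applyMorphism, applyMorphism, List.flatMap_assoc] at hgn
  exact hgn

theorem inOrbitClosure (hy : IsWordImage f x y) (hy' : IsWordImage f x' y')
    (hf : ∀ i, f (x i) ≠ []) (hx' : InOrbitClosure x' x) : InOrbitClosure y' y := by
  refine inOrbitClosure_iff.2 fun n => ?_
  obtain ⟨i, hi⟩ := inOrbitClosure_iff.1 hx' n
  exact ⟨imageLength f x i, wordPrefix_eq_of_le (hy'.wordPrefix_eq (hy.shift i) hi)
    (le_imageLength (hx'.apply_ne_nil hf) n)⟩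

end IsWordImage

end Image

section Desubstitution

variable {A B : Type*}

theorem exists_forall_eventually_wordPrefix_eq [Finite A] {ι : Type*}
    (U : Ultrafilter ι) (w : ι → ℕ → A) :
    ∃ z, ∀ n, ∀ᶠ i in (U : Filter ι), wordPrefix (w i) n = wordPrefix z n := by
  have hletter (j : ℕ) : ∃ a, ∀ᶠ i in (U : Filter ι), w i j = a :=
    Ultrafilter.eventually_exists_iff.1 (.of_forall fun i => ⟨w i j, rfl⟩)
  choose z hz using hletter
  refine ⟨z, fun n => ?_⟩
  simp only [wordPrefix_eq_iff]
  exact (Filter.eventually_all_finite (Set.finite_Iio n)).2 fun j _ => hz j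

theorem IsWordImage.exists_desubstitution [Finite A] {f : A → List B} {x : ℕ → A} {y l : ℕ → B}
    (hy : IsWordImage f x y) (hf : ∀ i, f (x i) ≠ []) (hl : InOrbitClosure l y) :
    ∃ z Z r, InOrbitClosure z x ∧ IsWordImage f z Z ∧ r < (f (z 0)).length ∧
      l = wordShift Z r := by
  have hcut (n : ℕ) : ∃ k r, r < (f (x k)).length ∧
      wordPrefix l n = wordPrefix (wordShift (wordShift y (imageLength f x k)) r) n := by
    obtain ⟨i, hi⟩ := inOrbitClosure_iff.1 hl n
    obtain ⟨k, r, hr, rfl⟩ := exists_eq_imageLength_add hf i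
    exact ⟨k, r, hr, hi.trans (by rw [wordShift_wordShift])⟩
  choose k r hr hlk using hcut
  let U := Filter.hyperfilter ℕ
  obtain ⟨z, hz⟩ := exists_forall_eventually_wordPrefix_eq U
    fun n => wordShift x (k n)
  have hzx : InOrbitClosure z x := inOrbitClosure_iff.2 fun n =>
    (hz n).exists.imp' k fun _ h => h.symm
  obtain ⟨R, hR, hrR⟩ : ∃ R ∈ Set.Iio (f (z 0)).length, ∀ᶠ n in (U : Filter ℕ), r n = R := by
    refine (Ultrafilter.eventually_exists_mem_iff (Set.finite_Iio _)).1 ((hz 1).mono fun n hn => ?_)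
    have hkn : x (k n) = z 0 :=
      (wordShift_apply_zero x _).symm.trans (wordPrefix_eq_iff.1 hn 0 one_pos)
    exact ⟨r n, hkn ▸ hr n, rfl⟩
  have hfz := hzx.apply_ne_nil hf
  obtain ⟨Z, hZ⟩ := exists_isWordImage hfz
  refine ⟨z, Z, R, hzx, hZ, hR, eq_of_forall_wordPrefix_eq fun n => ?_⟩
  have hlarge : ∀ᶠ m in (U : Filter ℕ), n ≤ m :=
    Nat.hyperfilter_le_atTop (Filter.eventually_ge_atTop n)
  obtain ⟨m, ⟨hzm, rfl⟩, hnm⟩ := (((hz (R + n)).and hrR).and hlarge).exists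
  have hZm := hZ.wordPrefix_eq (hy.shift (k m)) hzm.symm
  calc wordPrefix l n
      = wordPrefix (wordShift (wordShift y (imageLength f x (k m))) (r m)) n :=
        wordPrefix_eq_of_le (hlk m) hnm
    _ = wordPrefix (wordShift Z (r m)) n :=
        (wordPrefix_wordShift_eq (wordPrefix_eq_of_le hZm (le_imageLength hfz _))).symm

end Desubstitution

section Markers

variable {A B : Type*}

/-- `p` is a family of marker words witnessing that `f ∈ M_x`; see `MemM`. -/
structure IsMarkerFamily (f : A → List B) (x : ℕ → A) (p : A → List B) : Prop where
  ne_nil : ∀ a, p a ≠ []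
  exists_prefix : ∀ a y, InOrbitClosure y x → y 0 = a →
    ∃ n, p a <+: applyMorphism f (wordPrefix y n)
  not_prefix : ∀ a b, a ≠ b → ¬ p a <+: p b ∧ ¬ p b <+: p a

theorem memM_iff {f : A → List B} {x : ℕ → A} : MemM f x ↔ ∃ p, IsMarkerFamily f x p :=
  ⟨fun ⟨p, h₁, h₂, h₃⟩ => ⟨p, h₁, h₂, h₃⟩, fun ⟨p, h⟩ => ⟨p, h.1, h.2, h.3⟩⟩

instance isStrictTotalOrder_listLex (r : B → B → Prop) [IsStrictTotalOrder B r] :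
    IsStrictTotalOrder (List B) (List.Lex r) :=
  { isStrictWeakOrder_of_isOrderConnected with }

/-- The order on letters induced by the lexicographic order of their markers `p`: the order with
respect to which `f` is strictly increasing. -/
def markerOrder (r : B → B → Prop) (p : A → List B) : A → A → Prop :=
  fun a b => List.Lex r (p a) (p b)

namespace IsMarkerFamily

variable {f : A → List B} {x y z : ℕ → A} {p : A → List B} {Y Z : ℕ → B}

theorem eq_of_prefix (hp : IsMarkerFamily f x p) {a b : A} {w : List B} (ha : p a <+: w)
    (hb : p b <+: w) : a = b := by
  by_contra hab
  exact (List.prefix_or_prefix_of_prefix ha hb).elim (hp.not_prefix a b hab).1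
    (hp.not_prefix a b hab).2

theorem injective (hp : IsMarkerFamily f x p) : Function.Injective p :=
  fun _ _ hab => hp.eq_of_prefix List.prefix_rfl (hab ▸ List.prefix_rfl)

theorem isStrictTotalOrder_markerOrder (hp : IsMarkerFamily f x p) (r : B → B → Prop)
    [IsStrictTotalOrder B r] : IsStrictTotalOrder A (markerOrder r p) :=
  hp.injective.isStrictTotalOrder_onFun (r := List.Lex r)

theorem isPrefixOfWord (hp : IsMarkerFamily f x p) (hy : InOrbitClosure y x)
    (hY : IsWordImage f y Y) : IsPrefixOfWord (p (y 0)) Y := by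
  obtain ⟨n, w, hw⟩ := hp.exists_prefix _ y hy rfl
  exact (isPrefixOfWord_append.1 (hw ▸ hY n)).1

theorem apply_one_eq_of_apply_zero_eq_nil (hp : IsMarkerFamily f x p) (hy : InOrbitClosure y x)
    (h : f (y 0) = []) : y 1 = y 0 := by
  obtain ⟨n, hn⟩ := hp.exists_prefix _ y hy rfl
  obtain ⟨m, hm⟩ := hp.exists_prefix _ _ (hy.shift 1) (wordShift_apply_zero y 1)
  have hm' : p (y 1) <+: applyMorphism f (wordPrefix y (1 + m)) := by
    rwa [applyMorphism_wordPrefix_add, applyMorphism_wordPrefix_one, h, List.nil_append]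
  exact hp.eq_of_prefix (hm'.trans (applyMorphism_wordPrefix_prefix f y (Nat.le_add_right _ n)))
    (hn.trans (applyMorphism_wordPrefix_prefix f y (Nat.le_add_left n _)))

theorem apply_zero_ne_nil (hp : IsMarkerFamily f x p) (hy : InOrbitClosure y x) :
    f (y 0) ≠ [] := by
  intro h
  have hconst (i : ℕ) : y i = y 0 := by
    induction i with
    | zero => rfl
    | succ i ih =>
      have := hp.apply_one_eq_of_apply_zero_eq_nil (hy.shift i)
        (by rw [wordShift_apply_zero, ih, h])
      rwa [wordShift_apply_zero, ih, wordShift, Nat.add_comm] at this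
  obtain ⟨n, hn⟩ := hp.exists_prefix _ y hy rfl
  have hnil : applyMorphism f (wordPrefix y n) = [] := by
    simp [applyMorphism, wordPrefix, hconst, h]
  exact hp.ne_nil _ (List.prefix_nil.1 (hnil ▸ hn))

theorem apply_ne_nil (hp : IsMarkerFamily f x p) (hy : InOrbitClosure y x) (i : ℕ) :
    f (y i) ≠ [] :=
  wordShift_apply_zero y i ▸ hp.apply_zero_ne_nil (hy.shift i)

theorem lexLt_of_lexLt (hp : IsMarkerFamily f x p) {r : B → B → Prop} [Std.Asymm r]
    (hy : InOrbitClosure y x) (hz : InOrbitClosure z x) (hY : IsWordImage f y Y)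
    (hZ : IsWordImage f z Z) (h : LexLt (markerOrder r p) y z) : LexLt r Y Z := by
  obtain ⟨n, hn, hlt⟩ := h
  have hyz : wordPrefix y n = wordPrefix z n := wordPrefix_eq_iff.2 hn
  have hlength : imageLength f z n = imageLength f y n := by
    rw [imageLength, ← hyz, imageLength]
  have hne : y n ≠ z n := fun heq =>
    irrefl_of (List.Lex r) (p (z n)) (by rwa [markerOrder, heq] at hlt)
  have hpY := hp.isPrefixOfWord (hy.shift n) (hY.shift n)
  have hpZ := hp.isPrefixOfWord (hz.shift n) (hZ.shift n)
  rw [wordShift_apply_zero] at hpY hpZ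
  exact lexLt_of_lexLt_wordShift (hY.wordPrefix_eq hZ hyz)
    (lexLt_of_isPrefixOfWord hlt (hp.not_prefix _ _ hne).1 hpY (hlength ▸ hpZ))

theorem isLeastWord (hp : IsMarkerFamily f x p) {r : B → B → Prop} [IsStrictTotalOrder B r]
    {X : ℕ → B} {b : B} {k : ℕ} (hX : IsWordImage f x X) (hz : InOrbitClosure z x)
    (hZ : IsWordImage f z Z) (hk : k < (f (z 0)).length) (hl : IsLeastWord r X b (wordShift Z k)) :
    IsLeastWord (markerOrder r p) x (z 0) z := by
  have := hp.isStrictTotalOrder_markerOrder r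
  refine ⟨hz, rfl, fun y hy hy0 => lexLe_iff_not_lexLt.2 fun hlt => ?_⟩
  obtain ⟨Y, hY⟩ := exists_isWordImage (hp.apply_ne_nil hy)
  have hagree : wordPrefix Z (f (z 0)).length = wordPrefix Y (f (z 0)).length :=
    imageLength_one f z ▸ hZ.wordPrefix_eq hY (by rw [wordPrefix_one, wordPrefix_one, hy0])
  have hYZ : LexLt r (wordShift Y k) (wordShift Z k) :=
    (hp.lexLt_of_lexLt hy hz hY hZ hlt).shift (wordPrefix_eq_of_le hagree hk.le).symm
  have hYX : InOrbitClosure (wordShift Y k) X :=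
    (hX.inOrbitClosure hY (hp.apply_ne_nil (inOrbitClosure_self x)) hy).shift k
  have hYb : wordShift Y k 0 = b := by
    rw [← hl.2.1, wordShift_apply_zero, wordShift_apply_zero, wordPrefix_eq_iff.1 hagree k hk]
  exact lexLe_iff_not_lexLt.1 (hl.2.2 _ hYX hYb) hYZ

end IsMarkerFamily

end Markers

section SuffixImage

variable {A B C : Type*}

/-- `f(t)` is a suffix of the infinite word `s`, i.e. `s = u · f(t)` for some finite word `u`. -/
def IsSuffixImage (f : A → List B) (t : ℕ → A) (s : ℕ → B) : Prop :=
  ∃ k, IsWordImage f t (wordShift s k)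

namespace IsSuffixImage

theorem exists_eq_prepend {f : A → List B} {t : ℕ → A} {s : ℕ → B} (h : IsSuffixImage f t s) :
    ∃ u y, IsWordImage f t y ∧ s = prepend u y :=
  h.imp' (wordPrefix s) fun k hk => ⟨_, hk, (prepend_wordPrefix_wordShift s k).symm⟩

theorem comp {f : A → List B} {g : B → List C} {x : ℕ → A} {y : ℕ → B} {z : ℕ → C}
    (hf : IsSuffixImage f x y) (hg : IsSuffixImage g y z) :
    IsSuffixImage (fun a => applyMorphism g (f a)) x z := by
  obtain ⟨k, hk⟩ := hf
  obtain ⟨l, hl⟩ := hg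
  exact ⟨_, wordShift_wordShift z .. ▸ hk.comp (hl.shift k)⟩

theorem iterate {f : A → List A} {S : Type*} {w : S → ℕ → A} {F : S → S}
    (h : ∀ s, IsSuffixImage f (w (F s)) (w s)) (k : ℕ) (s : S) :
    IsSuffixImage (fun c => applyIter f k [c]) (w (F^[k] s)) (w s) := by
  induction k generalizing s with
  | zero =>
    refine ⟨0, fun n => ?_⟩
    simp only [applyMorphism, applyIter, Function.iterate_zero_apply, List.flatMap_singleton',
      IsPrefixOfWord, length_wordPrefix]
    rfl
  | succ k ih =>
    have hk := (ih (F s)).comp (h s)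
    rw [← Function.iterate_succ_apply] at hk
    simpa only [applyIter, Function.iterate_succ_apply'] using hk

end IsSuffixImage

end SuffixImage

section LeastTails

variable {A : Type*}

/-- The words `s_{a,σ,x}`, for all total orders `σ` and all letters `a`. -/
def leastTails (x : ℕ → A) : Set (ℕ → A) :=
  {s | ∃ σ, IsStrictTotalOrder A σ ∧ ∃ a l, IsLeastWord σ x a l ∧ wordShift l 1 = s}

theorem finite_leastTails [Finite A] (x : ℕ → A) : (leastTails x).Finite := by
  let L (i : (A → A → Prop) × A) : Set (ℕ → A) :=
    {s | IsStrictTotalOrder A i.1 ∧ ∃ l, IsLeastWord i.1 x i.2 l ∧ wordShift l 1 = s}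
  have hL (i) : (L i).Subsingleton := by
    rintro _ ⟨_, l, hl, rfl⟩ _ ⟨_, l', hl', rfl⟩
    rw [hl.unique hl']
  refine (Set.finite_iUnion fun i => (hL i).finite).subset ?_
  rintro s ⟨σ, hσ, a, hs⟩
  exact Set.mem_iUnion.2 ⟨(σ, a), hσ, hs⟩

theorem exists_mem_leastTails_isSuffixImage [Finite A] {f : A → List A} {x s : ℕ → A}
    (hx : IsWordImage f x x) (hf : MemM f x) (hs : s ∈ leastTails x) :
    ∃ t ∈ leastTails x, IsSuffixImage f t s := by
  obtain ⟨ρ, hρ, b, l, hl, rfl⟩ := hs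
  obtain ⟨p, hp⟩ := memM_iff.1 hf
  obtain ⟨z, Z, r, hz, hZ, hr, rfl⟩ :=
    hx.exists_desubstitution (hp.apply_ne_nil (inOrbitClosure_self x)) hl.1
  refine ⟨wordShift z 1, ⟨_, hp.isStrictTotalOrder_markerOrder ρ, z 0, z,
    hp.isLeastWord hx hz hZ hr hl, rfl⟩, (f (z 0)).length - (r + 1), ?_⟩
  have h := hZ.shift 1
  rwa [imageLength_one, ← Nat.add_sub_of_le (Nat.succ_le_of_lt hr), ← wordShift_wordShift,
    ← Nat.add_one, ← wordShift_wordShift Z] at h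

end LeastTails

theorem exists_iterate_mem_periodicPts {S : Type*} [Finite S] (F : S → S) (s : S) :
    ∃ k, 1 ≤ k ∧ F^[k] s ∈ Function.periodicPts F := by
  obtain ⟨i, j, hij, heq⟩ : ∃ i j, i < j ∧ F^[i + 1] s = F^[j + 1] s := by
    obtain ⟨i, j, hne, heq⟩ := Finite.exists_ne_map_eq_of_infinite fun i => F^[i + 1] s
    exact hne.lt_or_gt.elim (fun h => ⟨i, j, h, heq⟩) fun h => ⟨j, i, h, heq.symm⟩
  refine ⟨i + 1, by omega, Function.mk_mem_periodicPts (Nat.sub_pos_of_lt hij) ?_⟩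
  rw [Function.IsPeriodicPt, Function.IsFixedPt, ← Function.iterate_add_apply, heq]
  congr 1
  omega

theorem stmt19 {A : Type*} [Fintype A] (f : A → List A) (x : ℕ → A)
    (hfix : IsWordImage f x x) (hM : MemM f x)
    (ρ : A → A → Prop) (hρ : IsStrictTotalOrder A ρ)
    (b : A) (hb : ∃ i, x i = b)
    (lb : ℕ → A) (hlb : IsLeastWord ρ x b lb) :
    ∃ σ : A → A → Prop, IsStrictTotalOrder A σ ∧
      ∃ (a : A) (la : ℕ → A), IsLeastWord σ x a la ∧
        ∃ (u v : List A) (k m : ℕ), 1 ≤ k ∧ 1 ≤ m ∧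
          (∃ y : ℕ → A,
            IsWordImage (fun c => applyIter f k [c]) (fun n => la (n + 1)) y ∧
            (fun n => lb (n + 1)) = prepend u y) ∧
          (∃ y : ℕ → A,
            IsWordImage (fun c => applyIter f m [c]) (fun n => la (n + 1)) y ∧
            (fun n => la (n + 1)) = prepend v y) := by
  have hstep (s : leastTails x) : ∃ t : leastTails x, IsSuffixImage f t.1 s.1 :=
    Subtype.exists.2 (by simpa using exists_mem_leastTails_isSuffixImage hfix hM s.2)
  choose F hF using hstep
  have := (finite_leastTails x).to_subtype
  let s : leastTails x := ⟨wordShift lb 1, ρ, hρ, b, lb, hlb, rfl⟩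
  obtain ⟨k, hk, hper⟩ := exists_iterate_mem_periodicPts F s
  obtain ⟨m, hm, hFm⟩ := Function.mem_periodicPts.1 hper
  obtain ⟨σ, hσ, a, la, hla, hat⟩ := (F^[k] s).2
  have hsk := IsSuffixImage.iterate (w := Subtype.val) hF k s
  have htm := IsSuffixImage.iterate (w := Subtype.val) hF m (F^[k] s)
  rw [hFm.eq, ← hat] at htm
  rw [← hat] at hsk
  obtain ⟨u, hu⟩ := hsk.exists_eq_prepend
  obtain ⟨v, hv⟩ := htm.exists_eq_prepend
  exact ⟨σ, hσ, a, la, hla, u, v, k, m, hk, hm, hu, hv⟩
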